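/- Let (A,Λ) be any associative form ring, let (I,Γ) and (J,Δ) be two form ideals of (A,Λ), and let n ≥ 3. Define the sum of form ideals as (I,Γ)+(J,Δ) = (I+J, Γ+Δ) and the intersection as (I,Γ)∩(J,Δ) = (I∩J, Γ∩Δ). Then [EU(2n,(I,Γ)+(J,Δ)), EU(2n,(I,Γ)∩(J,Δ))] ≤ [EU(2n,I,Γ), EU(2n,J,Δ)]. -/

import Mathlib

open Matrix
open scoped commutatorElement

/-- Bak's form ring data on a ring `A`: an involution `bar`, a central symmetry
`λ` with `λ λ̄ = 1`, and a form parameter `Λ`. -/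
structure FormRingData (A : Type*) [Ring A] where
  bar : A →+ A
  bar_mul : ∀ a b : A, bar (a * b) = bar b * bar a
  bar_bar : ∀ a : A, bar (bar a) = a
  lam : A
  lam_comm : ∀ a : A, lam * a = a * lam
  lam_bar : lam * bar lam = 1
  Lambda : AddSubgroup A
  lambdaMin_mem : ∀ c : A, c - lam * bar c ∈ Lambda
  lambdaMax_mem : ∀ x ∈ Lambda, x = -(lam * bar x)
  lambda_conj : ∀ (c : A), ∀ x ∈ Lambda, c * x * bar c ∈ Lambda

namespace FormRingData

variable {A : Type*} [Ring A]

/-- Integral powers of the symmetry `λ`; negative powers use `λ̄ = λ⁻¹`. -/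
def lpow (D : FormRingData A) (k : ℤ) : A :=
  if 0 ≤ k then D.lam ^ k.toNat else (D.bar D.lam) ^ (-k).toNat

end FormRingData

/-- The index set `Ω = {1,…,n,−n,…,−1}`, coded as `Fin n × Bool`
(second component `true` = positive index). -/
abbrev Idx (n : ℕ) := Fin n × Bool

namespace Idx

/-- The involution `i ↦ −i` on indices. -/
def neg {n : ℕ} (i : Idx n) : Idx n := (i.1, !i.2)

/-- The sign `ε(i) ∈ {±1}`. -/
def eps {n : ℕ} (i : Idx n) : ℤ := if i.2 then 1 else -1

theorem neg_ne {n : ℕ} (i : Idx n) : neg i ≠ i := by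
  simp [neg, Prod.ext_iff]

theorem neg_injective {n : ℕ} : Function.Injective (neg (n := n)) := by
  intro i j h
  simp only [neg, Prod.mk.injEq] at h
  refine Prod.ext h.1 ?_
  have h2 := h.2
  cases hi : i.2 <;> cases hj : j.2 <;> simp_all

theorem neg_neg {n : ℕ} (i : Idx n) : neg (neg i) = i := by
  simp [neg]

end Idx

/-- `GL(2n, A)`, realised as the units of the `Ω × Ω` matrix ring over `A`. -/
abbrev GLn (A : Type*) [Ring A] (n : ℕ) := (Matrix (Idx n) (Idx n) A)ˣ

section aux

theorem one_add_mul_one_sub {R : Type*} [Ring R] {X : R} (h : X * X = 0) :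
    (1 + X) * (1 - X) = 1 := by
  have hh : (1 + X) * (1 - X) = 1 - X * X := by noncomm_ring
  rw [hh, h, sub_zero]

theorem one_sub_mul_one_add {R : Type*} [Ring R] {X : R} (h : X * X = 0) :
    (1 - X) * (1 + X) = 1 := by
  have hh : (1 - X) * (1 + X) = 1 - X * X := by noncomm_ring
  rw [hh, h, sub_zero]

theorem stdBasisMatrix_neg' {A : Type*} [Ring A] {n : ℕ} (i j : Idx n) (c : A) :
    Matrix.single i j (-c) = -Matrix.single i j c := by
  refine eq_neg_of_add_eq_zero_left ?_
  rw [← Matrix.single_add]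
  simp

end aux

namespace FormRingData

variable {A : Type*} [Ring A] {n : ℕ}

/-- The off-diagonal part of a short root element. -/
def Xmat (D : FormRingData A) (i j : Idx n) (c : A) : Matrix (Idx n) (Idx n) A :=
  Matrix.single i j c -
    Matrix.single (Idx.neg j) (Idx.neg i) (D.lpow ((Idx.eps j - Idx.eps i) / 2) * D.bar c)

theorem Xmat_mul (D : FormRingData A) {i j : Idx n} (hij : i ≠ j) (c c' : A) :
    D.Xmat i j c * D.Xmat i j c' = 0 := by
  unfold Xmat
  rw [sub_mul, mul_sub, mul_sub,
    Matrix.single_mul_single_of_ne _ _ _ _ (Ne.symm hij),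
    Matrix.single_mul_single_of_ne _ _ _ _ (Ne.symm (Idx.neg_ne j)),
    Matrix.single_mul_single_of_ne _ _ _ _ (Idx.neg_ne i),
    Matrix.single_mul_single_of_ne _ _ _ _ (fun h => hij (Idx.neg_injective h))]
  simp

theorem Xmat_neg (D : FormRingData A) (i j : Idx n) (c : A) :
    D.Xmat i j (-c) = -D.Xmat i j c := by
  unfold Xmat
  rw [map_neg, mul_neg, stdBasisMatrix_neg', stdBasisMatrix_neg']
  abel

/-- The elementary short root unipotent `T_{ij}(c)`, for `i ≠ ±j`
(with junk value `1` when `i = j`). -/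
def TS (D : FormRingData A) (i j : Idx n) (c : A) : GLn A n :=
  if h : i = j then 1 else
    { val := 1 + D.Xmat i j c
      inv := 1 + D.Xmat i j (-c)
      val_inv := by
        rw [D.Xmat_neg, ← sub_eq_add_neg]
        exact one_add_mul_one_sub (D.Xmat_mul h c c)
      inv_val := by
        rw [D.Xmat_neg, ← sub_eq_add_neg]
        exact one_sub_mul_one_add (D.Xmat_mul h c c) }

/-- The elementary long root unipotent `T_{i,−i}(c)`. -/
def TL (D : FormRingData A) (i : Idx n) (c : A) : GLn A n where
  val := 1 + Matrix.single i (Idx.neg i) c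
  inv := 1 + Matrix.single i (Idx.neg i) (-c)
  val_inv := by
    rw [stdBasisMatrix_neg', ← sub_eq_add_neg]
    exact one_add_mul_one_sub (Matrix.single_mul_single_of_ne _ _ _ _ (Idx.neg_ne i) _)
  inv_val := by
    rw [stdBasisMatrix_neg', ← sub_eq_add_neg]
    exact one_sub_mul_one_add (Matrix.single_mul_single_of_ne _ _ _ _ (Idx.neg_ne i) _)

/-- The elementary unitary transvection `T_{ij}(c)` (long or short root type
according to whether `j = −i`). -/
def T (D : FormRingData A) (i j : Idx n) (c : A) : GLn A n :=
  if j = Idx.neg i then D.TL i c else D.TS i j c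

/-- The elementary commutator `Y_{ij}(a,b) = [T_{ij}(a), T_{ji}(b)]`. -/
def Y (D : FormRingData A) (i j : Idx n) (a b : A) : GLn A n :=
  ⁅D.T i j a, D.T j i b⁆

/-- The elementary conjugate `Z_{ij}(a,c) = T_{ji}(c) T_{ij}(a) T_{ji}(−c)`. -/
def Z (D : FormRingData A) (i j : Idx n) (a c : A) : GLn A n :=
  D.T j i c * D.T i j a * D.T j i (-c)

/-- The set of elementary unitary transvections of level `(I,Γ)`. -/
def transvGen (D : FormRingData A) (n : ℕ) (I Γ : AddSubgroup A) : Set (GLn A n) :=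
  {x | ∃ i j : Idx n, i ≠ j ∧ i ≠ Idx.neg j ∧ ∃ c ∈ I, x = D.TS i j c} ∪
    {x | ∃ i : Idx n, ∃ g ∈ Γ, x = D.TL i (D.lpow (-(Idx.eps i + 1) / 2) * g)}

/-- The unrelative elementary subgroup `FU(2n, I, Γ)`. -/
def FU (D : FormRingData A) (n : ℕ) (I Γ : AddSubgroup A) : Subgroup (GLn A n) :=
  Subgroup.closure (D.transvGen n I Γ)

/-- The absolute elementary unitary group `EU(2n, A, Λ)`. -/
def EUmax (D : FormRingData A) (n : ℕ) : Subgroup (GLn A n) :=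
  D.FU n ⊤ D.Lambda

/-- The relative elementary subgroup `EU(2n, I, Γ)`: the normal closure of
`FU(2n, I, Γ)` in `EU(2n, A, Λ)`. -/
def EU (D : FormRingData A) (n : ℕ) (I Γ : AddSubgroup A) : Subgroup (GLn A n) :=
  Subgroup.closure {x | ∃ g ∈ D.EUmax n, ∃ t ∈ D.transvGen n I Γ, x = g * t * g⁻¹}

/-- The additive subgroup generated by products `st`, `s ∈ S`, `t ∈ T`. -/
def mulSub (S T : AddSubgroup A) : AddSubgroup A :=
  AddSubgroup.closure {x | ∃ a ∈ S, ∃ b ∈ T, x = a * b}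

/-- The symmetrised product `ST + TS` of two (additive subgroups underlying)
two-sided ideals. -/
def symI (S T : AddSubgroup A) : AddSubgroup A :=
  mulSub S T ⊔ mulSub T S

/-- The minimal relative form parameter `Γ_min(K)` of level `K`. -/
def gammaMin (D : FormRingData A) (K : AddSubgroup A) : AddSubgroup A :=
  AddSubgroup.closure
    ({x | ∃ a ∈ K, x = a - D.lam * D.bar a} ∪
      {x | ∃ a ∈ K, ∃ c ∈ D.Lambda, x = a * c * D.bar a})

/-- The relative form parameter `ˢΓ = ⟨ b γ b̄ ∣ b ∈ S, γ ∈ Γ ⟩`. -/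
def conjPar (D : FormRingData A) (S Γ : AddSubgroup A) : AddSubgroup A :=
  AddSubgroup.closure {x | ∃ b ∈ S, ∃ g ∈ Γ, x = b * g * D.bar b}

/-- The relative form parameter of the symmetrised product
`(I,Γ)∘(J,Δ) = (IJ+JI, Γ_min(IJ+JI) + ᴶΓ + ᴵΔ)`. -/
def symG (D : FormRingData A) (I Γ J Δ : AddSubgroup A) : AddSubgroup A :=
  D.gammaMin (symI I J) ⊔ D.conjPar J Γ ⊔ D.conjPar I Δ

/-- The elementary subgroup `EU(2n, (I,Γ)∘(J,Δ))` of the symmetrised product. -/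
def EUsym (D : FormRingData A) (n : ℕ) (I Γ J Δ : AddSubgroup A) : Subgroup (GLn A n) :=
  D.EU n (symI I J) (D.symG I Γ J Δ)

/-- Position-dependent membership `a ∈ (I,Γ)` at position `(i,j)`:
`a ∈ I` for a short root position, `a ∈ λ^{−(ε(i)+1)/2}Γ` for a long one. -/
def pmem (D : FormRingData A) (I Γ : AddSubgroup A) {n : ℕ} (i j : Idx n) (a : A) : Prop :=
  if j = Idx.neg i then ∃ g ∈ Γ, a = D.lpow (-(Idx.eps i + 1) / 2) * g else a ∈ I

end FormRingData

/-- A form ideal `(I,Γ)` of the form ring `(A,Λ)`. -/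
structure FormIdeal {A : Type*} [Ring A] (D : FormRingData A) where
  I : AddSubgroup A
  Gamma : AddSubgroup A
  mul_mem_left : ∀ (c : A), ∀ x ∈ I, c * x ∈ I
  mul_mem_right : ∀ (c : A), ∀ x ∈ I, x * c ∈ I
  bar_mem : ∀ x ∈ I, D.bar x ∈ I
  gammaMin_le : D.gammaMin I ≤ Gamma
  gamma_le_I : Gamma ≤ I
  gamma_le_Lambda : Gamma ≤ D.Lambda
  gamma_conj : ∀ (c : A), ∀ x ∈ Gamma, c * x * D.bar c ∈ Gamma

namespace FormRingData

variable {A : Type*} [Ring A] {n : ℕ}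

theorem TS_add (D : FormRingData A) {i j : Idx n} (h : i ≠ j) (a b : A) :
    D.TS i j (a + b) = D.TS i j a * D.TS i j b := by
  apply Units.ext
  simp only [TS, dif_neg h, Units.val_mul]
  have hx : D.Xmat i j (a + b) = D.Xmat i j a + D.Xmat i j b := by
    unfold Xmat
    rw [map_add, mul_add, Matrix.single_add, Matrix.single_add]
    abel
  rw [add_mul, mul_add, mul_add, D.Xmat_mul h, hx]
  simp only [one_mul, mul_one, add_zero]
  abel

theorem TL_add (D : FormRingData A) (i : Idx n) (a b : A) :
    D.TL i (a + b) = D.TL i a * D.TL i b := by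
  apply Units.ext
  simp only [TL, Units.val_mul]
  rw [Matrix.single_add, add_mul, mul_add, mul_add]
  rw [Matrix.single_mul_single_of_ne _ _ _ _ (Idx.neg_ne i)]
  simp only [one_mul, mul_one, add_zero]
  abel

theorem transvGen_mono (D : FormRingData A) {I I' G G' : AddSubgroup A} (h : I ≤ I')
    (h' : G ≤ G') : D.transvGen n I G ⊆ D.transvGen n I' G' := by
  rintro x (⟨i, j, h1, h2, c, hc, rfl⟩ | ⟨i, g, hg, rfl⟩)
  · exact Or.inl ⟨i, j, h1, h2, c, h hc, rfl⟩
  · exact Or.inr ⟨i, g, h' hg, rfl⟩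

theorem EU_mono (D : FormRingData A) {I I' G G' : AddSubgroup A} (h : I ≤ I')
    (h' : G ≤ G') : D.EU n I G ≤ D.EU n I' G' := by
  apply Subgroup.closure_mono
  rintro x ⟨g, hg, t, ht, rfl⟩
  exact ⟨g, hg, t, D.transvGen_mono h h' ht, rfl⟩

theorem EU_le_max (D : FormRingData A) {I G : AddSubgroup A} (h : G ≤ D.Lambda) :
    D.EU n I G ≤ D.EUmax n := by
  refine (Subgroup.closure_le _).2 ?_
  rintro x ⟨g, hg, t, ht, rfl⟩
  exact mul_mem (mul_mem hg (Subgroup.subset_closure (D.transvGen_mono le_top h ht)))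
    (inv_mem hg)

theorem EU_conj (D : FormRingData A) {I G : AddSubgroup A} {g x : GLn A n}
    (hg : g ∈ D.EUmax n) (hx : x ∈ D.EU n I G) : g * x * g⁻¹ ∈ D.EU n I G := by
  induction hx using Subgroup.closure_induction with
  | mem x hx =>
    obtain ⟨k, hk, t, ht, rfl⟩ := hx
    exact Subgroup.subset_closure ⟨g * k, mul_mem hg hk, t, ht, by group⟩
  | one => simp
  | mul x y _ _ hx hy =>
    have := mul_mem hx hy
    rwa [show g * x * g⁻¹ * (g * y * g⁻¹) = g * (x * y) * g⁻¹ by group] at this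
  | inv x _ hx =>
    have := inv_mem hx
    rwa [show (g * x * g⁻¹)⁻¹ = g * x⁻¹ * g⁻¹ by group] at this

theorem comm_conj (D : FormRingData A) {I G J H : AddSubgroup A} {g x : GLn A n}
    (hg : g ∈ D.EUmax n) (hx : x ∈ ⁅D.EU n I G, D.EU n J H⁆) :
    g * x * g⁻¹ ∈ ⁅D.EU n I G, D.EU n J H⁆ := by
  rw [Subgroup.commutator_def] at hx
  induction hx using Subgroup.closure_induction with
  | mem x hx =>
    obtain ⟨a, ha, b, hb, rfl⟩ := hx
    have := Subgroup.commutator_mem_commutator (D.EU_conj hg ha) (D.EU_conj hg hb)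
    rwa [show ⁅g * a * g⁻¹, g * b * g⁻¹⁆ = g * ⁅a, b⁆ * g⁻¹ by
      simp only [commutatorElement_def]; group] at this
  | one => simp
  | mul x y _ _ hx hy =>
    have := mul_mem hx hy
    rwa [show g * x * g⁻¹ * (g * y * g⁻¹) = g * (x * y) * g⁻¹ by group] at this
  | inv x _ hx =>
    have := inv_mem hx
    rwa [show (g * x * g⁻¹)⁻¹ = g * x⁻¹ * g⁻¹ by group] at this

theorem transvGen_sup (D : FormRingData A) {I G J H : AddSubgroup A} {t : GLn A n}
    (ht : t ∈ D.transvGen n (I ⊔ J) (G ⊔ H)) :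
    ∃ t₁ ∈ D.transvGen n I G, ∃ t₂ ∈ D.transvGen n J H, t = t₁ * t₂ := by
  obtain (⟨i, j, h1, h2, c, hc, rfl⟩ | ⟨i, g, hg, rfl⟩) := ht
  · obtain ⟨a, ha, b, hb, rfl⟩ := AddSubgroup.mem_sup.1 hc
    exact ⟨_, Or.inl ⟨i, j, h1, h2, a, ha, rfl⟩, _, Or.inl ⟨i, j, h1, h2, b, hb, rfl⟩,
      D.TS_add h1 a b⟩
  · obtain ⟨a, ha, b, hb, rfl⟩ := AddSubgroup.mem_sup.1 hg
    refine ⟨_, Or.inr ⟨i, a, ha, rfl⟩, _, Or.inr ⟨i, b, hb, rfl⟩, ?_⟩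
    rw [mul_add, D.TL_add]

end FormRingData

/-- Theorem 10: `[EU(2n,(I,Γ)+(J,Δ)), EU(2n,(I,Γ)∩(J,Δ))] ≤ [EU(2n,I,Γ), EU(2n,J,Δ)]`. -/
theorem statement7 {A : Type*} [Ring A] (D : FormRingData A) (n : ℕ) (hn : 3 ≤ n)
    (FI FJ : FormIdeal D) :
    ⁅D.EU n (FI.I ⊔ FJ.I) (FI.Gamma ⊔ FJ.Gamma),
        D.EU n (FI.I ⊓ FJ.I) (FI.Gamma ⊓ FJ.Gamma)⁆ ≤
      ⁅D.EU n FI.I FI.Gamma, D.EU n FJ.I FJ.Gamma⁆ := by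
  rw [Subgroup.commutator_le]
  intro g hg l hl
  have hlI : l ∈ D.EU n FI.I FI.Gamma := D.EU_mono inf_le_left inf_le_left hl
  have hlJ : l ∈ D.EU n FJ.I FJ.Gamma := D.EU_mono inf_le_right inf_le_right hl
  have hmul : ∀ x y : GLn A n, x ∈ D.EUmax n →
      ⁅x, l⁆ ∈ ⁅D.EU n FI.I FI.Gamma, D.EU n FJ.I FJ.Gamma⁆ →
      ⁅y, l⁆ ∈ ⁅D.EU n FI.I FI.Gamma, D.EU n FJ.I FJ.Gamma⁆ →
      ⁅x * y, l⁆ ∈ ⁅D.EU n FI.I FI.Gamma, D.EU n FJ.I FJ.Gamma⁆ := by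
    intro x y hx h1 h2
    have := mul_mem (D.comm_conj hx h2) h1
    rwa [show x * ⁅y, l⁆ * x⁻¹ * ⁅x, l⁆ = ⁅x * y, l⁆ by
      simp only [commutatorElement_def]; group] at this
  have hmax : ∀ x ∈ D.EU n (FI.I ⊔ FJ.I) (FI.Gamma ⊔ FJ.Gamma), x ∈ D.EUmax n :=
    fun x hx => D.EU_le_max (sup_le FI.gamma_le_Lambda FJ.gamma_le_Lambda) hx
  unfold FormRingData.EU at hg
  induction hg using Subgroup.closure_induction with
  | mem x hx =>
    obtain ⟨k, hk, t, ht, rfl⟩ := hx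
    obtain ⟨t₁, h1, t₂, h2, rfl⟩ := D.transvGen_sup ht
    have e1 : k * t₁ * k⁻¹ ∈ D.EU n FI.I FI.Gamma := Subgroup.subset_closure ⟨k, hk, t₁, h1, rfl⟩
    have e2 : k * t₂ * k⁻¹ ∈ D.EU n FJ.I FJ.Gamma := Subgroup.subset_closure ⟨k, hk, t₂, h2, rfl⟩
    rw [show k * (t₁ * t₂) * k⁻¹ = (k * t₁ * k⁻¹) * (k * t₂ * k⁻¹) by group]
    refine hmul _ _ (D.EU_le_max FI.gamma_le_Lambda e1)
      (Subgroup.commutator_mem_commutator e1 hlJ) ?_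
    rw [Subgroup.commutator_comm]
    exact Subgroup.commutator_mem_commutator e2 hlI
  | one => simp
  | mul x y hx _ h1 h2 => exact hmul x y (hmax x hx) h1 h2
  | inv x hx h1 =>
    have := D.comm_conj (inv_mem (hmax x hx)) (inv_mem h1)
    rwa [show x⁻¹ * ⁅x, l⁆⁻¹ * x⁻¹⁻¹ = ⁅x⁻¹, l⁆ by
      simp only [commutatorElement_def]; group] at this
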